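/- arXiv:2402.18290 — 2 statements merged into one kernel-verified Lean document; each statement's English description precedes it below -/
import Mathlib

section
/- For h = 5 there exists a group isomorphism u : ℤ/8 ⊕ (ℤ/2)⁴ → ℤ⁵/A₅ℤ⁵ such that for all a, b with integer lifts x = (x₁,…,x₅) and y = (y₁,…,y₅): ∂λ(u(a),u(b)) = 5x₁y₁/8 + (x₁y₃ + x₃y₁ + x₁y₅ + x₅y₁ + x₂y₃ + x₃y₂ + x₂y₅ + x₅y₂ + x₄y₅ + x₅y₄)/2 mod ℤ and ∂θ(u(a)) = 5x₁²/16 + (x₄² + x₅² + x₁x₃ + x₁x₅ + x₂x₃ + x₂x₅ + x₄x₅)/2 mod ℤ. -/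
open Matrix

noncomputable section

/-- The matrix `Q_h`: first row all `4`; in rows `2,…,h` diagonal and
above-diagonal entries are `2`, below-diagonal entries are `0`. -/
def Qmat (h : ℕ) : Matrix (Fin h) (Fin h) ℤ :=
  Matrix.of fun i j => if (i : ℕ) = 0 then 4 else if i ≤ j then 2 else 0

/-- `A_h = Q_h + Q_hᵀ`. -/
def Amat (h : ℕ) : Matrix (Fin h) (Fin h) ℤ := Qmat h + (Qmat h)ᵀ

/-- `A_h` viewed as a rational matrix. -/
def AmatQ (h : ℕ) : Matrix (Fin h) (Fin h) ℚ := (Amat h).map (Int.cast)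

/-- `Q_h` viewed as a rational matrix. -/
def QmatQ (h : ℕ) : Matrix (Fin h) (Fin h) ℚ := (Qmat h).map (Int.cast)

/-- The cokernel `ℤ^h / A_h ℤ^h`. -/
abbrev Coker (h : ℕ) := (Fin h → ℤ) ⧸ LinearMap.range ((Amat h).mulVecLin)

/-- The quotient map `ℤ^h → ℤ^h / A_h ℤ^h`. -/
def ckMk {h : ℕ} (x : Fin h → ℤ) : Coker h := Submodule.Quotient.mk x

def ratVec {h : ℕ} (x : Fin h → ℤ) : Fin h → ℚ := fun i => (x i : ℚ)

/-- The boundary linking form `∂λ` computed on representatives: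
`x ᵀ A_h⁻¹ y mod ℤ`, valued in `ℚ/ℤ`. -/
def linkR (h : ℕ) (x y : Fin h → ℤ) : AddCircle (1 : ℚ) :=
  ((ratVec x ⬝ᵥ ((AmatQ h)⁻¹ *ᵥ ratVec y) : ℚ) : AddCircle (1 : ℚ))

/-- The boundary quadratic form `∂θ` computed on representatives:
`xᵀ A_h⁻¹ Q_h A_h⁻¹ x mod ℤ`, valued in `ℚ/ℤ`. -/
def quadR (h : ℕ) (x : Fin h → ℤ) : AddCircle (1 : ℚ) :=
  ((ratVec x ⬝ᵥ (((AmatQ h)⁻¹ * QmatQ h * (AmatQ h)⁻¹) *ᵥ ratVec x) : ℚ) : AddCircle (1 : ℚ))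
theorem Amat5 : Amat 5 = !![8, 4, 4, 4, 4; 4, 4, 2, 2, 2; 4, 2, 4, 2, 2; 4, 2, 2, 4, 2; 4, 2, 2, 2, 4] := by
  ext i j
  fin_cases i <;> fin_cases j <;> simp [Amat, Qmat]

/-- The rational inverse of `A₅`. -/
def Ainv5 : Matrix (Fin 5) (Fin 5) ℚ :=
  !![5/8, -1/4, -1/4, -1/4, -1/4; -1/4, 1/2, 0, 0, 0; -1/4, 0, 1/2, 0, 0;
    -1/4, 0, 0, 1/2, 0; -1/4, 0, 0, 0, 1/2]

theorem AmatQ5_inv : (AmatQ 5)⁻¹ = Ainv5 := by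
  apply Matrix.inv_eq_right_inv
  rw [AmatQ, Amat5]
  ext i j
  fin_cases i <;> fin_cases j <;>
    simp [Ainv5, Matrix.mul_apply, Fin.sum_univ_five] <;> norm_num

theorem QmatQ5 : QmatQ 5 =
    !![4, 4, 4, 4, 4; 0, 2, 2, 2, 2; 0, 0, 2, 2, 2; 0, 0, 0, 2, 2; 0, 0, 0, 0, 2] := by
  ext i j
  fin_cases i <;> fin_cases j <;> simp [QmatQ, Qmat]

theorem theta5 : Ainv5 * QmatQ 5 * Ainv5 =
    !![5/16, 3/8, 1/8, -1/8, -3/8; -5/8, 1/4, 1/4, 1/4, 1/4; -3/8, -1/4, 1/4, 1/4, 1/4;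
      -1/8, -1/4, -1/4, 1/4, 1/4; 1/8, -1/4, -1/4, -1/4, 1/4] := by
  rw [QmatQ5]
  ext i j
  fin_cases i <;> fin_cases j <;>
    simp [Ainv5, Matrix.mul_apply, Fin.sum_univ_five] <;> norm_num

/-- The inverse isometry, on representatives. -/
def fHom : (Fin 5 → ℤ) →+ (ZMod 8 × ZMod 2 × ZMod 2 × ZMod 2 × ZMod 2) where
  toFun x := (((x 0 + 2 * x 1 + 2 * x 2 + 2 * x 3 + 2 * x 4) : ℤ),
    ((x 2 + x 3 + x 4) : ℤ), ((x 1 + x 4) : ℤ),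
    ((x 3 + x 4) : ℤ), ((x 2 + x 3) : ℤ))
  map_zero' := by simp
  map_add' x y := by
    ext <;> simp <;> ring

theorem fHom_eq_iff (x' x : Fin 5 → ℤ) :
    fHom x' = ((x 0 : ZMod 8), (x 1 : ZMod 2), (x 2 : ZMod 2), (x 3 : ZMod 2), (x 4 : ZMod 2)) ↔
    ∃ k0 k1 k2 k3 k4 : ℤ, x 0 = (x' 0 + 2 * x' 1 + 2 * x' 2 + 2 * x' 3 + 2 * x' 4) + 8 * k0 ∧
      x 1 = (x' 2 + x' 3 + x' 4) + 2 * k1 ∧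
      x 2 = (x' 1 + x' 4) + 2 * k2 ∧
      x 3 = (x' 3 + x' 4) + 2 * k3 ∧
      x 4 = (x' 2 + x' 3) + 2 * k4 := by
  simp only [fHom, AddMonoidHom.coe_mk, ZeroHom.coe_mk, Prod.mk.injEq,
    ZMod.intCast_eq_intCast_iff_dvd_sub]
  constructor
  · rintro ⟨⟨k0, h0⟩, ⟨k1, h1⟩, ⟨k2, h2⟩, ⟨k3, h3⟩, ⟨k4, h4⟩⟩
    push_cast at h0 h1 h2 h3 h4
    exact ⟨k0, k1, k2, k3, k4, by linarith, by linarith, by linarith, by linarith, by linarith⟩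
  · rintro ⟨k0, k1, k2, k3, k4, h0, h1, h2, h3, h4⟩
    refine ⟨⟨k0, ?_⟩, ⟨k1, ?_⟩, ⟨k2, ?_⟩, ⟨k3, ?_⟩, ⟨k4, ?_⟩⟩ <;> push_cast <;> linarith

theorem fHom_surj : Function.Surjective fHom := by
  rintro ⟨a0, a1, a2, a3, a4⟩
  obtain ⟨b0, rfl⟩ := ZMod.intCast_surjective a0
  obtain ⟨b1, rfl⟩ := ZMod.intCast_surjective a1
  obtain ⟨b2, rfl⟩ := ZMod.intCast_surjective a2
  obtain ⟨b3, rfl⟩ := ZMod.intCast_surjective a3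
  obtain ⟨b4, rfl⟩ := ZMod.intCast_surjective a4
  refine ⟨![b0 + 2 * b2 + 2 * b4, b1 + b2 + b4, b1 + b3, b1 + b3 + b4,
    b1 + 2 * b3 + 2 * b2 + b4], ?_⟩
  simp only [fHom, AddMonoidHom.coe_mk, ZeroHom.coe_mk, Prod.mk.injEq,
    ZMod.intCast_eq_intCast_iff_dvd_sub, Matrix.cons_val]
  push_cast
  refine ⟨?_, ?_, ?_, ?_, ?_⟩ <;> omega

theorem fHom_ker : (LinearMap.range ((Amat 5).mulVecLin)).toAddSubgroup = fHom.ker := by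
  ext x
  rw [AddMonoidHom.mem_ker]
  have h0 : (0 : ZMod 8 × ZMod 2 × ZMod 2 × ZMod 2 × ZMod 2) = ((((0 : Fin 5 → ℤ) 0 : ℤ) : ZMod 8),
      (((0 : Fin 5 → ℤ) 1 : ℤ) : ZMod 2), (((0 : Fin 5 → ℤ) 2 : ℤ) : ZMod 2),
      (((0 : Fin 5 → ℤ) 3 : ℤ) : ZMod 2), (((0 : Fin 5 → ℤ) 4 : ℤ) : ZMod 2)) := by
    simp; rfl
  rw [h0, fHom_eq_iff, Submodule.mem_toAddSubgroup, LinearMap.mem_range, Amat5]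
  simp only [Pi.zero_apply]
  constructor
  · rintro ⟨z, rfl⟩
    simp only [Matrix.mulVecLin_apply, Matrix.mulVec, dotProduct, Fin.sum_univ_five,
      Matrix.of_apply, Matrix.cons_val]
    refine ⟨-((8 * z 0 + 4 * z 1 + 4 * z 2 + 4 * z 3 + 4 * z 4 + 2 * (4 * (4 * z 0) + 10 * (z 1 + z 2 + z 3 + z 4))) / 8),
      -(6 * z 0 + 3 * z 1 + 4 * z 2 + 4 * z 3 + 4 * z 4),
      -(4 * z 0 + 3 * z 1 + 2 * z 2 + 2 * z 3 + 3 * z 4),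
      -(4 * z 0 + 2 * z 1 + 2 * z 2 + 3 * z 3 + 3 * z 4),
      -(4 * z 0 + 2 * z 1 + 3 * z 2 + 3 * z 3 + 2 * z 4), ?_, ?_, ?_, ?_, ?_⟩ <;> omega
  · rintro ⟨k0, k1, k2, k3, k4, h0, h1, h2, h3, h4⟩
    refine ⟨![(5 * x 0 - 2 * x 1 - 2 * x 2 - 2 * x 3 - 2 * x 4) / 8, (2 * x 1 - x 0) / 4,
      (2 * x 2 - x 0) / 4, (2 * x 3 - x 0) / 4, (2 * x 4 - x 0) / 4], ?_⟩
    ext i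
    fin_cases i <;>
      simp [Matrix.mulVec, dotProduct, Fin.sum_univ_five] <;> omega

/-- The isomorphism `ℤ⁵/A₅ℤ⁵ ≃ ℤ/8 ⊕ (ℤ/2)⁴`. -/
def eEquiv : Coker 5 ≃+ (ZMod 8 × ZMod 2 × ZMod 2 × ZMod 2 × ZMod 2) :=
  (QuotientAddGroup.quotientAddEquivOfEq fHom_ker).trans
    (QuotientAddGroup.quotientKerEquivOfSurjective fHom fHom_surj)

theorem eEquiv_mk (x : Fin 5 → ℤ) : eEquiv (ckMk x) = fHom x := rfl

theorem circle_eq (a b : ℚ) (n : ℤ) (h : b = a + n) :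
    (a : AddCircle (1 : ℚ)) = (b : AddCircle (1 : ℚ)) := by
  refine (QuotientAddGroup.eq).2 (AddSubgroup.mem_zmultiples_iff.2 ⟨n, ?_⟩)
  rw [h]; simp

/-- For h = 5 there is a group isomorphism u : ℤ/8 ⊕ (ℤ/2)⁴ → ℤ⁵/A₅ℤ⁵ identifying the
boundary linking form with 5x₁y₁/8 + (x₁y₃+x₃y₁+x₁y₅+x₅y₁+x₂y₃+x₃y₂+x₂y₅+x₅y₂+x₄y₅+x₅y₄)/2
mod ℤ and the boundary quadratic form with 5x₁²/16 + (x₄²+x₅²+x₁x₃+x₁x₅+x₂x₃+x₂x₅+x₄x₅)/2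
mod ℤ, computed from integer lifts x, y of the arguments. -/
theorem boundary_forms_h5 :
    ∃ u : (ZMod 8 × ZMod 2 × ZMod 2 × ZMod 2 × ZMod 2) ≃+ Coker 5,
      ∀ x y x' y' : Fin 5 → ℤ,
        ckMk x' = u ((x 0 : ZMod 8), (x 1 : ZMod 2), (x 2 : ZMod 2), (x 3 : ZMod 2),
          (x 4 : ZMod 2)) →
        ckMk y' = u ((y 0 : ZMod 8), (y 1 : ZMod 2), (y 2 : ZMod 2), (y 3 : ZMod 2),
          (y 4 : ZMod 2)) →
        linkR 5 x' y' =
          ((5 * (x 0 : ℚ) * (y 0 : ℚ) / 8 +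
            ((x 0 : ℚ) * (y 2 : ℚ) + (x 2 : ℚ) * (y 0 : ℚ) + (x 0 : ℚ) * (y 4 : ℚ) +
              (x 4 : ℚ) * (y 0 : ℚ) + (x 1 : ℚ) * (y 2 : ℚ) + (x 2 : ℚ) * (y 1 : ℚ) +
              (x 1 : ℚ) * (y 4 : ℚ) + (x 4 : ℚ) * (y 1 : ℚ) + (x 3 : ℚ) * (y 4 : ℚ) +
              (x 4 : ℚ) * (y 3 : ℚ)) / 2 : ℚ) : AddCircle (1 : ℚ)) ∧
        quadR 5 x' =
          ((5 * (x 0 : ℚ) ^ 2 / 16 +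
            ((x 3 : ℚ) ^ 2 + (x 4 : ℚ) ^ 2 + (x 0 : ℚ) * (x 2 : ℚ) + (x 0 : ℚ) * (x 4 : ℚ) +
              (x 1 : ℚ) * (x 2 : ℚ) + (x 1 : ℚ) * (x 4 : ℚ) + (x 3 : ℚ) * (x 4 : ℚ)) / 2 : ℚ) :
            AddCircle (1 : ℚ)) := by
  
  refine ⟨eEquiv.symm, ?_⟩
  intro x y x' y' hx hy
  rw [AddEquiv.eq_symm_apply, eEquiv_mk, fHom_eq_iff] at hx hy
  obtain ⟨k0, k1, k2, k3, k4, h0, h1, h2, h3, h4⟩ := hx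
  obtain ⟨l0, l1, l2, l3, l4, g0, g1, g2, g3, g4⟩ := hy
  constructor
  · refine circle_eq _ _ (2 * x' 0 * y' 1 + 2 * x' 0 * y' 2 + 2 * x' 0 * y' 3 + 2 * x' 0 * y' 4 + 2 * x' 1 * y' 0 + 4 * x' 1 * y' 1 + 5 * x' 1 * y' 2 + 5 * x' 1 * y' 3 + 5 * x' 1 * y' 4 + 2 * x' 2 * y' 0 + 5 * x' 2 * y' 1 + 5 * x' 2 * y' 2 + 6 * x' 2 * y' 3 + 6 * x' 2 * y' 4 + 2 * x' 3 * y' 0 + 5 * x' 3 * y' 1 + 6 * x' 3 * y' 2 + 6 * x' 3 * y' 3 + 6 * x' 3 * y' 4 + 2 * x' 4 * y' 0 + 5 * x' 4 * y' 1 + 6 * x' 4 * y' 2 + 6 * x' 4 * y' 3 + 5 * x' 4 * y' 4 + 5 * k0 * (y' 0 + 2 * y' 1 + 2 * y' 2 + 2 * y' 3 + 2 * y' 4) + 5 * (x' 0 + 2 * x' 1 + 2 * x' 2 + 2 * x' 3 + 2 * x' 4) * l0 + 40 * k0 * l0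
        + 4 * k0 * (y' 1 + y' 4) + 1 * (x' 0 + 2 * x' 1 + 2 * x' 2 + 2 * x' 3 + 2 * x' 4) * l2 + 8 * k0 * l2
        + 1 * k2 * (y' 0 + 2 * y' 1 + 2 * y' 2 + 2 * y' 3 + 2 * y' 4) + 4 * (x' 1 + x' 4) * l0 + 8 * k2 * l0
        + 4 * k0 * (y' 2 + y' 3) + 1 * (x' 0 + 2 * x' 1 + 2 * x' 2 + 2 * x' 3 + 2 * x' 4) * l4 + 8 * k0 * l4
        + 1 * k4 * (y' 0 + 2 * y' 1 + 2 * y' 2 + 2 * y' 3 + 2 * y' 4) + 4 * (x' 2 + x' 3) * l0 + 8 * k4 * l0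
        + 1 * k1 * (y' 1 + y' 4) + 1 * (x' 2 + x' 3 + x' 4) * l2 + 2 * k1 * l2
        + 1 * k2 * (y' 2 + y' 3 + y' 4) + 1 * (x' 1 + x' 4) * l1 + 2 * k2 * l1
        + 1 * k1 * (y' 2 + y' 3) + 1 * (x' 2 + x' 3 + x' 4) * l4 + 2 * k1 * l4
        + 1 * k4 * (y' 2 + y' 3 + y' 4) + 1 * (x' 2 + x' 3) * l1 + 2 * k4 * l1
        + 1 * k3 * (y' 2 + y' 3) + 1 * (x' 3 + x' 4) * l4 + 2 * k3 * l4
        + 1 * k4 * (y' 3 + y' 4) + 1 * (x' 2 + x' 3) * l3 + 2 * k4 * l3) ?_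
    rw [AmatQ5_inv, h0, h1, h2, h3, h4, g0, g1, g2, g3, g4]
    simp only [Ainv5, ratVec, Matrix.mulVec, dotProduct, Fin.sum_univ_five,
      Matrix.of_apply, Matrix.cons_val]
    push_cast
    ring
  · refine circle_eq _ _ (2 * x' 0 * x' 1 + 2 * x' 0 * x' 2 + 2 * x' 0 * x' 3 + 2 * x' 0 * x' 4 + 2 * x' 1 * x' 1 + 5 * x' 1 * x' 2 + 5 * x' 1 * x' 3 + 5 * x' 1 * x' 4 + 3 * x' 2 * x' 2 + 7 * x' 2 * x' 3 + 6 * x' 2 * x' 4 + 4 * x' 3 * x' 3 + 7 * x' 3 * x' 4 + 3 * x' 4 * x' 4 + 5 * k0 * (x' 0 + 2 * x' 1 + 2 * x' 2 + 2 * x' 3 + 2 * x' 4) + 20 * k0 ^ 2 + 2 * k3 * (x' 3 + x' 4) + 2 * k3 ^ 2 + 2 * k4 * (x' 2 + x' 3) + 2 * k4 ^ 2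
        + 4 * k0 * (x' 1 + x' 4) + 1 * (x' 0 + 2 * x' 1 + 2 * x' 2 + 2 * x' 3 + 2 * x' 4) * k2 + 8 * k0 * k2
        + 4 * k0 * (x' 2 + x' 3) + 1 * (x' 0 + 2 * x' 1 + 2 * x' 2 + 2 * x' 3 + 2 * x' 4) * k4 + 8 * k0 * k4
        + 1 * k1 * (x' 1 + x' 4) + 1 * (x' 2 + x' 3 + x' 4) * k2 + 2 * k1 * k2
        + 1 * k1 * (x' 2 + x' 3) + 1 * (x' 2 + x' 3 + x' 4) * k4 + 2 * k1 * k4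
        + 1 * k3 * (x' 2 + x' 3) + 1 * (x' 3 + x' 4) * k4 + 2 * k3 * k4) ?_
    rw [AmatQ5_inv, theta5, h0, h1, h2, h3, h4]
    simp only [ratVec, Matrix.mulVec, dotProduct, Fin.sum_univ_five,
      Matrix.of_apply, Matrix.cons_val]
    push_cast
    ring
end
end

section
/- For h = 3, the boundary map ∂ is surjective onto the automorphisms of the boundary forms: for every group automorphism φ of ℤ³/A₃ℤ³ satisfying ∂λ(φ(ξ),φ(η)) = ∂λ(ξ,η) and ∂θ(φ(ξ)) = ∂θ(ξ) for all ξ, η, there exists P ∈ GL₃(ℤ) with P^T A₃ P = A₃ such that φ([x]) = [(P^T)^{-1} x] for all x ∈ ℤ³. Equivalently, the boundary automorphism set bAut(ℤ³, [Q₃]) is trivial. -/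
open Matrix

noncomputable section

/-- `8 A₃⁻¹` -/
def Cm : Matrix (Fin 3) (Fin 3) ℤ := !![3, -2, -2; -2, 4, 0; -2, 0, 4]

/-- The bilinear form of `Cm`. -/
def cf (x y : Fin 3 → ℤ) : ℤ :=
  3 * x 0 * y 0 - 2 * x 0 * y 1 - 2 * x 0 * y 2 - 2 * x 1 * y 0 + 4 * x 1 * y 1
    - 2 * x 2 * y 0 + 4 * x 2 * y 2

lemma Amat3 : Amat 3 = !![8, 4, 4; 4, 4, 2; 4, 2, 4] := by
  ext i j; fin_cases i <;> fin_cases j <;> simp [Amat, Qmat]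

lemma Qmat3 : Qmat 3 = !![4, 4, 4; 0, 2, 2; 0, 0, 2] := by
  ext i j; fin_cases i <;> fin_cases j <;> simp [Qmat]

lemma AmatQinv : (AmatQ 3)⁻¹ =
    !![3/8, -2/8, -2/8; -2/8, 4/8, 0; -2/8, 0, 4/8] := by
  apply Matrix.inv_eq_right_inv
  rw [AmatQ, Amat3]
  ext i j
  fin_cases i <;> fin_cases j <;> simp [Matrix.mul_apply, Fin.sum_univ_three] <;> norm_num

lemma linkR_eq (x y : Fin 3 → ℤ) :
    linkR 3 x y = (((cf x y : ℚ) / 8 : ℚ) : AddCircle (1 : ℚ)) := by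
  unfold linkR
  rw [AmatQinv]
  congr 1
  simp [Matrix.mulVec, dotProduct, Fin.sum_univ_three, ratVec, cf]
  ring

lemma quadR_eq (x : Fin 3 → ℤ) :
    quadR 3 x = (((cf x x : ℚ) / 16 : ℚ) : AddCircle (1 : ℚ)) := by
  unfold quadR
  have hQ : QmatQ 3 = !![4, 4, 4; 0, 2, 2; 0, 0, 2] := by
    rw [QmatQ, Qmat3]
    ext i j
    fin_cases i <;> fin_cases j <;> simp
  rw [AmatQinv, hQ]
  congr 1
  simp only [← Matrix.mulVec_mulVec]
  simp [Matrix.mulVec, dotProduct, Fin.sum_univ_three, ratVec, cf]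
  ring

lemma circ_eq (a b : ℤ) (m : ℤ) (hm : m ≠ 0)
    (h : (((a : ℚ) / m : ℚ) : AddCircle (1 : ℚ)) = (((b : ℚ) / m : ℚ) : AddCircle (1 : ℚ))) :
    m ∣ a - b := by
  rw [← sub_eq_zero, ← AddCircle.coe_sub, AddCircle.coe_eq_zero_iff] at h
  obtain ⟨n, hn⟩ := h
  refine ⟨n, ?_⟩
  have hm' : (m : ℚ) ≠ 0 := by exact_mod_cast hm
  simp at hn
  field_simp at hn
  have : ((m * n : ℤ) : ℚ) = ((a - b : ℤ) : ℚ) := by push_cast; linarith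
  exact (by exact_mod_cast this.symm)

lemma ckMk_eq (x v y : Fin 3 → ℤ) (h0 : x 0 - v 0 = 8 * y 0 + 4 * y 1 + 4 * y 2)
    (h1 : x 1 - v 1 = 4 * y 0 + 4 * y 1 + 2 * y 2)
    (h2 : x 2 - v 2 = 4 * y 0 + 2 * y 1 + 4 * y 2) : (ckMk x : Coker 3) = ckMk v := by
  unfold ckMk
  rw [Submodule.Quotient.eq]
  refine ⟨y, ?_⟩
  rw [Amat3]
  ext i
  fin_cases i <;> simp [Matrix.mulVec, dotProduct, Fin.sum_univ_three] <;> linarith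

/-- Explicit congruence modulo the image of `A₃`. -/
def cong (x v : Fin 3 → ℤ) : Prop :=
  (3 * (x 0 - v 0) - 2 * (x 1 - v 1) - 2 * (x 2 - v 2)) % 8 = 0 ∧
  (-2 * (x 0 - v 0) + 4 * (x 1 - v 1)) % 8 = 0 ∧ (-2 * (x 0 - v 0) + 4 * (x 2 - v 2)) % 8 = 0

instance (x v : Fin 3 → ℤ) : Decidable (cong x v) := by unfold cong; infer_instance

lemma ckMk_of_cong {x v : Fin 3 → ℤ} (h : cong x v) : (ckMk x : Coker 3) = ckMk v := by
  obtain ⟨h0, h1, h2⟩ := h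
  apply ckMk_eq x v ![(3 * (x 0 - v 0) - 2 * (x 1 - v 1) - 2 * (x 2 - v 2)) / 8,
    (-2 * (x 0 - v 0) + 4 * (x 1 - v 1)) / 8, (-2 * (x 0 - v 0) + 4 * (x 2 - v 2)) / 8] <;>
  simp <;> omega

lemma reduce (x : Fin 3 → ℤ) : ∃ a : Fin 8, ∃ b c : Fin 2,
    (ckMk x : Coker 3) = ckMk ![(a : ℤ), (b : ℤ), (c : ℤ)] ∧
    cf x x % 16 = cf ![(a : ℤ), (b : ℤ), (c : ℤ)] ![(a : ℤ), (b : ℤ), (c : ℤ)] % 16 := by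
  obtain ⟨s, b, hb, hx1⟩ : ∃ s : ℤ, ∃ b : Fin 2, True ∧ x 1 = 2 * s + b :=
    ⟨x 1 / 2, ⟨(x 1 % 2).toNat, by omega⟩, trivial, by simp; omega⟩
  obtain ⟨t, c, hc, hx2⟩ : ∃ s : ℤ, ∃ b : Fin 2, True ∧ x 2 = 2 * s + b :=
    ⟨x 2 / 2, ⟨(x 2 % 2).toNat, by omega⟩, trivial, by simp; omega⟩
  obtain ⟨u, a, ha, hx0⟩ : ∃ u : ℤ, ∃ a : Fin 8, True ∧ x 0 = 8 * u - 4 * s - 4 * t + a :=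
    ⟨(x 0 + 4 * s + 4 * t) / 8, ⟨((x 0 + 4 * s + 4 * t) % 8).toNat, by omega⟩, trivial,
      by simp; omega⟩
  refine ⟨a, b, c, ckMk_eq _ _ ![3*u-2*s-2*t, -2*u+2*s+t, -2*u+s+2*t] ?_ ?_ ?_, ?_⟩
  · simp [hx0]; ring
  · simp [hx1]; ring
  · simp [hx2]; ring
  · change cf x x ≡ _ [ZMOD 16]
    apply Int.ModEq.symm
    rw [Int.modEq_iff_dvd]
    obtain ⟨p, hp⟩ : ∃ p, p = 3*u-2*s-2*t := ⟨_, rfl⟩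
    obtain ⟨q, hq⟩ : ∃ q, q = -2*u+2*s+t := ⟨_, rfl⟩
    obtain ⟨r, hr⟩ : ∃ r, r = -2*u+s+2*t := ⟨_, rfl⟩
    have g0 : x 0 = a + (8 * p + 4 * q + 4 * r) := by rw [hx0, hp, hq, hr]; ring
    have g1 : x 1 = b + (4 * p + 4 * q + 2 * r) := by rw [hx1, hp, hq, hr]; ring
    have g2 : x 2 = c + (4 * p + 2 * q + 4 * r) := by rw [hx2, hp, hq, hr]; ring
    refine ⟨p * a + q * b + r * c + 4*p*p + 2*q*q + 2*r*r + 4*p*q + 4*p*r + 2*q*r, ?_⟩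
    simp only [cf, g0, g1, g2, Matrix.cons_val]
    ring

def L1 : List (Fin 3 → ℤ) := [![1, 0, 0], ![1, 0, 1], ![1, 1, 0], ![1, 1, 1],
  ![-1, 0, 0], ![-1, 0, -1], ![-1, -1, 0], ![-1, -1, -1]]

def L2 : List (Fin 3 → ℤ) := [![0, 1, 0], ![0, 0, 1], ![2, 1, 1],
  ![0, -1, 0], ![0, 0, -1], ![-2, -1, -1]]

lemma lift1 (x : Fin 3 → ℤ) (h : cf x x % 16 = 3) : ∃ v ∈ L1, (ckMk x : Coker 3) = ckMk v := by
  obtain ⟨a, b, c, h1, h2⟩ := reduce x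
  rw [h] at h2
  have key : ∀ a : Fin 8, ∀ b c : Fin 2,
      3 = cf ![(a : ℤ), (b : ℤ), (c : ℤ)] ![(a : ℤ), (b : ℤ), (c : ℤ)] % 16 →
      ∃ v ∈ L1, cong ![(a : ℤ), (b : ℤ), (c : ℤ)] v := by decide +kernel
  obtain ⟨v, hv, hc⟩ := key a b c h2
  exact ⟨v, hv, h1.trans (ckMk_of_cong hc)⟩

lemma lift2 (x : Fin 3 → ℤ) (h : cf x x % 16 = 4) : ∃ v ∈ L2, (ckMk x : Coker 3) = ckMk v := by
  obtain ⟨a, b, c, h1, h2⟩ := reduce x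
  rw [h] at h2
  have key : ∀ a : Fin 8, ∀ b c : Fin 2,
      4 = cf ![(a : ℤ), (b : ℤ), (c : ℤ)] ![(a : ℤ), (b : ℤ), (c : ℤ)] % 16 →
      ∃ v ∈ L2, cong ![(a : ℤ), (b : ℤ), (c : ℤ)] v := by decide +kernel
  obtain ⟨v, hv, hc⟩ := key a b c h2
  exact ⟨v, hv, h1.trans (ckMk_of_cong hc)⟩

lemma L1_norm : ∀ a ∈ L1, cf a a = 3 := by decide +kernel
lemma L2_norm : ∀ a ∈ L2, cf a a = 4 := by decide +kernel
lemma L12 : ∀ a ∈ L1, ∀ b ∈ L2, (cf a b + 2) % 8 = 0 → cf a b = -2 := by decide +kernel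
lemma L22 : ∀ a ∈ L2, ∀ b ∈ L2, cf a b % 8 = 0 → cf a b = 0 := by decide +kernel

lemma cf_comm (x y : Fin 3 → ℤ) : cf x y = cf y x := by unfold cf; ring

lemma ckMk_decomp (x a b c : Fin 3 → ℤ) (φ : Coker 3 ≃+ Coker 3)
    (ha : φ (ckMk ![1, 0, 0]) = ckMk a) (hb : φ (ckMk ![0, 1, 0]) = ckMk b)
    (hc : φ (ckMk ![0, 0, 1]) = ckMk c) :
    φ (ckMk x) = ckMk ((Matrix.of ![a, b, c])ᵀ *ᵥ x) := by
  have hx : (ckMk x : Coker 3) = x 0 • ckMk ![1, 0, 0] + x 1 • ckMk ![0, 1, 0]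
      + x 2 • ckMk ![0, 0, 1] := by
    unfold ckMk
    rw [← Submodule.Quotient.mk_smul, ← Submodule.Quotient.mk_smul, ← Submodule.Quotient.mk_smul,
      ← Submodule.Quotient.mk_add, ← Submodule.Quotient.mk_add]
    congr 1
    ext i; fin_cases i <;> simp
  rw [hx, map_add, map_add, map_zsmul, map_zsmul, map_zsmul, ha, hb, hc]
  unfold ckMk
  rw [← Submodule.Quotient.mk_smul, ← Submodule.Quotient.mk_smul, ← Submodule.Quotient.mk_smul,
      ← Submodule.Quotient.mk_add, ← Submodule.Quotient.mk_add]
  congr 1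
  ext i; simp [Matrix.mulVec, dotProduct, Fin.sum_univ_three]; ring

lemma AC : Amat 3 * Cm = 8 • (1 : Matrix (Fin 3) (Fin 3) ℤ) := by
  rw [Amat3, Cm]; decide +kernel

lemma isometry_of (N : Matrix (Fin 3) (Fin 3) ℤ) (hN : Nᵀ * Cm * N = Cm) :
    IsUnit N.det ∧ N * Amat 3 * Nᵀ = Amat 3 := by
  have hd : N.det * N.det = 1 := by
    have h := congrArg Matrix.det hN
    have hC : Cm.det = 16 := by simp [Cm, Matrix.det_fin_three]
    rw [Matrix.det_mul, Matrix.det_mul, Matrix.det_transpose, hC] at h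
    linarith
  have hu : IsUnit N.det := IsUnit.of_mul_eq_one _ hd
  refine ⟨hu, ?_⟩
  have hut : IsUnit Nᵀ.det := by rwa [Matrix.det_transpose]
  have h1 : Cm * N = (Nᵀ)⁻¹ * Cm := by
    conv_rhs => rw [← hN]
    rw [Matrix.mul_assoc Nᵀ, ← Matrix.mul_assoc, Matrix.nonsing_inv_mul _ hut, Matrix.one_mul]
  have CA : Cm * Amat 3 = 8 • (1 : Matrix (Fin 3) (Fin 3) ℤ) := by
    rw [Amat3, Cm]; decide +kernel
  have h2 : Cm * (N * Amat 3 * Nᵀ) = Cm * Amat 3 := by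
    rw [← Matrix.mul_assoc, ← Matrix.mul_assoc, h1, Matrix.mul_assoc (Nᵀ)⁻¹, CA]
    rw [Matrix.mul_smul, Matrix.smul_mul, Matrix.mul_one, Matrix.nonsing_inv_mul _ hut]
  have h3 := congrArg (fun M => Amat 3 * M) h2
  simp only [← Matrix.mul_assoc, AC, Matrix.smul_mul, Matrix.one_mul] at h3
  ext i j
  have := congrFun (congrFun h3 i) j
  simp only [Matrix.smul_apply, nsmul_eq_mul] at this
  push_cast at this
  linarith

/-- For h = 3, every group automorphism of ℤ^3/A_3 ℤ^3 preserving the boundary linking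
form ∂λ and the boundary quadratic form ∂θ is induced, via [x] ↦ [(Pᵀ)⁻¹ x], by an isometry
P ∈ GL_3(ℤ) of A_3; i.e. the boundary map ∂ is surjective and bAut(ℤ^3, [Q_3]) is
trivial. -/
theorem boundary_map_surjective_h3 (φ : Coker 3 ≃+ Coker 3)
    (hlink : ∀ x y x' y' : Fin 3 → ℤ, ckMk x' = φ (ckMk x) → ckMk y' = φ (ckMk y) →
      linkR 3 x' y' = linkR 3 x y)
    (hquad : ∀ x x' : Fin 3 → ℤ, ckMk x' = φ (ckMk x) → quadR 3 x' = quadR 3 x) :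
    ∃ P : Matrix (Fin 3) (Fin 3) ℤ, IsUnit P.det ∧ Pᵀ * Amat 3 * P = Amat 3 ∧
      ∀ x : Fin 3 → ℤ, φ (ckMk x) = ckMk ((Pᵀ)⁻¹ *ᵥ x) := by
  have hq : ∀ x x' : Fin 3 → ℤ, ckMk x' = φ (ckMk x) → (16 : ℤ) ∣ cf x' x' - cf x x := by
    intro x x' h
    have := hquad x x' h
    rw [quadR_eq, quadR_eq] at this
    exact circ_eq _ _ 16 (by norm_num) (by exact_mod_cast this)
  have hl : ∀ x y x' y' : Fin 3 → ℤ, ckMk x' = φ (ckMk x) → ckMk y' = φ (ckMk y) →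
      (8 : ℤ) ∣ cf x' y' - cf x y := by
    intro x y x' y' h h'
    have := hlink x y x' y' h h'
    rw [linkR_eq, linkR_eq] at this
    exact circ_eq _ _ 8 (by norm_num) (by exact_mod_cast this)
  have hsurj : ∀ z : Coker 3, ∃ x : Fin 3 → ℤ, ckMk x = z :=
    fun z => Submodule.Quotient.mk_surjective _ z
  have e00 : cf ![1, 0, 0] ![1, 0, 0] = 3 := by decide
  have e11 : cf ![0, 1, 0] ![0, 1, 0] = 4 := by decide
  have e22 : cf ![0, 0, 1] ![0, 0, 1] = 4 := by decide
  have e01 : cf ![1, 0, 0] ![0, 1, 0] = -2 := by decide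
  have e02 : cf ![1, 0, 0] ![0, 0, 1] = -2 := by decide
  have e12 : cf ![0, 1, 0] ![0, 0, 1] = 0 := by decide
  obtain ⟨a, ha, ha'⟩ : ∃ v ∈ L1, φ (ckMk ![1, 0, 0]) = ckMk v := by
    obtain ⟨x, hx⟩ := hsurj (φ (ckMk ![1, 0, 0]))
    have := hq _ _ hx
    rw [← hx]; exact lift1 x (by omega)
  obtain ⟨b, hb, hb'⟩ : ∃ v ∈ L2, φ (ckMk ![0, 1, 0]) = ckMk v := by
    obtain ⟨x, hx⟩ := hsurj (φ (ckMk ![0, 1, 0]))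
    have := hq _ _ hx
    rw [← hx]; exact lift2 x (by omega)
  obtain ⟨c, hc, hc'⟩ : ∃ v ∈ L2, φ (ckMk ![0, 0, 1]) = ckMk v := by
    obtain ⟨x, hx⟩ := hsurj (φ (ckMk ![0, 0, 1]))
    have := hq _ _ hx
    rw [← hx]; exact lift2 x (by omega)
  have hab : cf a b = -2 := L12 a ha b hb (by have := hl _ _ _ _ ha'.symm hb'.symm; omega)
  have hac : cf a c = -2 := L12 a ha c hc (by have := hl _ _ _ _ ha'.symm hc'.symm; omega)
  have hbc : cf b c = 0 := L22 b hb c hc (by have := hl _ _ _ _ hb'.symm hc'.symm; omega)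
  have haa := L1_norm a ha
  have hbb := L2_norm b hb
  have hcc := L2_norm c hc
  have hN : ((Matrix.of ![a, b, c])ᵀ)ᵀ * Cm * (Matrix.of ![a, b, c])ᵀ = Cm := by
    clear e00 e11 e22 e01 e02 e12 hl hq
    unfold cf at *
    ext i j
    fin_cases i <;> fin_cases j <;>
      simp [Matrix.mul_apply, Fin.sum_univ_three, Cm, vecHead, vecTail] <;> linarith
  obtain ⟨hu, hA⟩ := isometry_of _ hN
  have hdec := fun x => ckMk_decomp x a b c φ ha' hb' hc'
  generalize (Matrix.of ![a, b, c])ᵀ = N at hu hA hdec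
  have hut : IsUnit Nᵀ.det := by rwa [Matrix.det_transpose]
  refine ⟨(Nᵀ)⁻¹, ?_, ?_, ?_⟩
  · exact Matrix.isUnit_nonsing_inv_det _ hut
  · rw [Matrix.transpose_nonsing_inv, Matrix.transpose_transpose]
    conv_lhs => rw [← hA]
    simp only [Matrix.mul_assoc]
    rw [Matrix.mul_nonsing_inv _ hut, Matrix.mul_one, ← Matrix.mul_assoc,
      Matrix.nonsing_inv_mul _ hu, Matrix.one_mul]
  · intro x
    rw [Matrix.transpose_nonsing_inv, Matrix.transpose_transpose,
      Matrix.nonsing_inv_nonsing_inv _ hu]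
    exact hdec x
end
end
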